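/- arXiv:2303.11468 — 3 statements merged into one kernel-verified Lean document; each statement's English description precedes it below -/
import Mathlib

section
/- Let r ≥ 2 and j ≥ 1 be integers. Let Λ ⊆ L be an infinite-dimensional locally finite subspace whose norm sequence (r_i)_{i≥1} satisfies r_{i+1} ≤ q·r_i for all i ≥ 1 and limsup_{i→∞} log_q(r_i)/i ≤ 1/r, and let exp_Λ(x) := x·∏_{λ∈Λ∖{0}}(1 − x/λ). Then for every c ∈ L with 0 < ‖c‖ ≤ q^{−j} and every ordered basis (λ_i)_{i≥1} of Λ, setting Λ_m := span_{F_q}{λ_1,…,λ_m}, the limit lim_{m→∞} ∑_{λ∈Λ_m∖{0}} exp_Λ(cλ)^{q^j}/λ exists in L and equals 0. (In the paper, Λ is the period lattice of a Drinfeld module of rank r ≥ 2 over C_∞, for which the two hypotheses on the norm sequence hold, and c ranges over elements of K_∞ with ‖c‖ ≤ q^{−j}, yielding ∑_{λ∈Λ∖{0}} exp_Λ(cλ)^{q^j}/λ = 0.) -/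
/-! Write `q = #Fq`, `Λ_m` for the span of the first `m` basis vectors, `D_m` for the product of the
norms of the nonzero elements of `Λ_m`, and `e_N(x) = x ∏ (1 - x/v)` over the nonzero `v ∈ Λ_N`.
Since `e_N → exp_Λ` pointwise, it is enough to bound the sums over `Λ_m` with `e_N` in place of
`exp_Λ`, uniformly in `N`, by a quantity that tends to zero with `m`.

* The polynomial `e_N` is `Fq`-linear, `e_N(x) = ∑ α_i x^(q^i)`, and the recursion in `N` for the
  monic vanishing polynomial of `Λ_N` gives `‖α_i‖ ≤ 1 / D_i` (`exists_coeffs`). The recursion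
  closes up because `D_(n+1) / D_n ^ q` is nondecreasing in `n` (`normProd_convex`).
* The nodal weights of the additive group `Λ_m` are all equal, so its power sums of exponent `k` are
  a constant multiple of the divided difference of `x^k` over `Λ_m`. Hence
  `∑_{v ∈ Λ_m} v^(q^n - 1)` vanishes for `n < m` (`sum_pow_eq_zero`) and has norm at most `D_n` for
  `n ≥ m` (`norm_sum_pow_le`).
* Expanding `e_N(cx)^(q^j) / x` therefore leaves only the terms of index `i` with `i + j ≥ m`, and
  these are bounded by `T_i = ‖c‖^(q^(i+j)) D_(i+j) / D_i^(q^j)` (`norm_sum_approx_le`).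
* The ratio `T_(i+1) / T_i` is a positive power of `‖c‖ ‖lam (i+j)‖ / ‖lam i‖`. This base is at most
  `1` by the growth hypothesis and the bound on `‖c‖`, and by the limsup hypothesis it is infinitely
  often at most `q^(-j/4)`, since `1/r ≤ 1/2 < 3/4`. So `T_i → 0` (`tendsto_termBound`).

Convergence of the infinite product, without which its value would be the junk value `1`, is
`multipliable_one_add_of_tendsto_zero`.
-/

open Filter Topology

/-- `V` is a locally finite `Fq`-subspace of `L`. -/
def IsLocallyFiniteSubspace (Fq : Type*) [Field Fq] {L : Type*} [NormedField L]
    [Algebra Fq L] (V : Submodule Fq L) : Prop :=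
  ∀ r : ℝ, 0 < r → {x : L | x ∈ V ∧ ‖x‖ ≤ r}.Finite

/-- `v` is an ordered basis of the locally finite subspace `V ⊆ L` (indices shifted so that
`v 0` is the paper's `v_1`); the norm sequence of `V` is then `r_{i+1} = ‖v i‖`. -/
def IsOrderedBasis (Fq : Type*) [Field Fq] {L : Type*} [NormedField L]
    [Algebra Fq L] (V : Submodule Fq L) (v : ℕ → L) : Prop :=
  ∀ m : ℕ,
    v m ∈ V ∧ v m ∉ Submodule.span Fq (Set.range fun i : Fin m => v i) ∧
      ∀ x ∈ V, x ∉ Submodule.span Fq (Set.range fun i : Fin m => v i) → ‖v m‖ ≤ ‖x‖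

/-! ### Spans of initial basis vectors and the products of their norms -/

open scoped Classical in
/-- The finite set `span_{Fq} {lam 0, …, lam (N-1)}`, built up one basis vector at a time. -/
noncomputable def spanFinset (Fq : Type*) [Field Fq] [Fintype Fq] {L : Type*} [Field L]
    [Algebra Fq L] (lam : ℕ → L) : ℕ → Finset L
  | 0 => {0}
  | N + 1 => (Finset.univ ×ˢ spanFinset Fq lam N).image fun p : Fq × L => p.2 + p.1 • lam N

/-- For `ρ i = ‖lam i‖` this is `∏ ‖v‖` over the nonzero `v` in the span of
`lam 0, …, lam (N-1)`; see `norm_prod_erase_zero`. -/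
def normProd (q : ℕ) (ρ : ℕ → ℝ) : ℕ → ℝ
  | 0 => 1
  | N + 1 => normProd q ρ N * ρ N ^ ((q - 1) * q ^ N)

/-! ### Real inequalities for the norm sequence -/

lemma normProd_pos (q : ℕ) {ρ : ℕ → ℝ} (hρ : ∀ i, 0 < ρ i) (N : ℕ) : 0 < normProd q ρ N := by
  induction N with
  | zero => simp [normProd]
  | succ N ih => exact mul_pos ih (pow_pos (hρ N) _)

/-- As a function of `q ^ n`, `log (normProd n)` is piecewise linear with slopes `log (ρ n)`; this is
the resulting convexity statement. -/
lemma normProd_convex (q : ℕ) {ρ : ℕ → ℝ} (hρ : ∀ i, 0 < ρ i) (hmono : Monotone ρ) :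
    Antitone fun n => normProd q ρ n ^ q / normProd q ρ (n + 1) := by
  refine antitone_nat_of_succ_le fun n => ?_
  have h0 := normProd_pos q hρ
  rw [div_le_div_iff₀ (h0 _) (h0 _)]
  have e1 : normProd q ρ (n + 1) ^ q
      = normProd q ρ n ^ q * ρ n ^ ((q - 1) * q ^ (n + 1)) := by
    rw [normProd, mul_pow, ← pow_mul, pow_succ, mul_assoc]
  have e2 : normProd q ρ (n + 1 + 1)
      = normProd q ρ (n + 1) * ρ (n + 1) ^ ((q - 1) * q ^ (n + 1)) := rfl
  rw [e1, e2]
  have h1 : ρ n ^ ((q - 1) * q ^ (n + 1)) ≤ ρ (n + 1) ^ ((q - 1) * q ^ (n + 1)) :=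
    pow_le_pow_left₀ (hρ n).le (hmono n.le_succ) _
  have h2 : 0 ≤ normProd q ρ n ^ q * normProd q ρ (n + 1) :=
    mul_nonneg (pow_nonneg (h0 _).le _) (h0 _).le
  nlinarith [mul_le_mul_of_nonneg_left h1 h2]

lemma pow_add_sub_one_mul {q : ℕ} (hq : 1 ≤ q) (n : ℕ) : q ^ n + (q - 1) * q ^ n = q ^ (n + 1) := by
  obtain ⟨k, rfl⟩ := Nat.exists_eq_add_of_le hq
  simp only [Nat.add_sub_cancel_left]
  ring

lemma normProd_mul_pow_le {q : ℕ} (hq : 1 ≤ q) {ρ : ℕ → ℝ} (hρ : ∀ i, 0 < ρ i)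
    (hmono : Monotone ρ) (m : ℕ) {n : ℕ} (hn : m + 1 ≤ n) :
    normProd q ρ (m + 1) * ρ m ^ q ^ n ≤ normProd q ρ n * ρ m ^ q ^ (m + 1) := by
  induction n, hn using Nat.le_induction with
  | base => exact le_rfl
  | succ n hn ih =>
    have h1 : ρ m ^ ((q - 1) * q ^ n) ≤ ρ n ^ ((q - 1) * q ^ n) :=
      pow_le_pow_left₀ (hρ m).le (hmono (by omega)) _
    calc normProd q ρ (m + 1) * ρ m ^ q ^ (n + 1)
        = (normProd q ρ (m + 1) * ρ m ^ q ^ n) * ρ m ^ ((q - 1) * q ^ n) := by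
          rw [mul_assoc, ← pow_add, pow_add_sub_one_mul hq]
      _ ≤ (normProd q ρ n * ρ m ^ q ^ (m + 1)) * ρ n ^ ((q - 1) * q ^ n) :=
          mul_le_mul ih h1 (pow_nonneg (hρ m).le _)
            (mul_nonneg (normProd_pos q hρ n).le (pow_nonneg (hρ m).le _))
      _ = _ := by rw [normProd]; ring

lemma tendsto_zero_of_frequently_contract {T : ℕ → ℝ} (h0 : ∀ i, 0 ≤ T i) (hT : Antitone T)
    {θ : ℝ} (hθ : θ < 1) (hfreq : ∃ᶠ i in atTop, T (i + 1) ≤ θ * T i) :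
    Tendsto T atTop (𝓝 0) := by
  have hlim : Tendsto T atTop (𝓝 (⨅ i, T i)) :=
    tendsto_atTop_ciInf hT ⟨0, by rintro _ ⟨i, rfl⟩; exact h0 i⟩
  have hl0 : 0 ≤ ⨅ i, T i := le_ciInf h0
  have h1 : (⨅ i, T i) ≤ θ * ⨅ i, T i := by
    have := ((hlim.const_mul θ).sub (hlim.comp (tendsto_add_atTop_nat 1)))
    have h2 := ge_of_tendsto_of_frequently this
      (hfreq.mono fun i (hi : T (i + 1) ≤ θ * T i) => sub_nonneg.2 hi)
    linarith
  have : (⨅ i, T i) = 0 := by nlinarith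
  rwa [this] at hlim

/-- The growth of `ρ` over `j` consecutive steps is infinitely often smaller than `q ^ (3j/4)`,
because the exponential growth rate of `ρ` is at most `q ^ (1/2)` per step. -/
lemma frequently_ratio_le {q r j : ℕ} (hq : 2 ≤ q) (hr : 2 ≤ r) (hj : 1 ≤ j) {ρ : ℕ → ℝ}
    (hρ : ∀ i, 0 < ρ i) (hgrow : ∀ n, ρ (n + 1) ≤ (q : ℝ) * ρ n)
    (hlimsup : limsup (fun n : ℕ => Real.logb q (ρ n) / (n + 1)) atTop ≤ 1 / (r : ℝ)) :
    ∃ᶠ i in atTop, ρ (i + j) ≤ (q : ℝ) ^ (3 / 4 * (j : ℝ)) * ρ i := by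
  have hq1 : (1 : ℝ) < q := by exact_mod_cast hq
  have hq0 : (0 : ℝ) < q := by linarith
  set u : ℕ → ℝ := fun n => Real.logb q (ρ n) with hu
  have hstep : ∀ n, u (n + 1) ≤ 1 + u n := fun n => by
    have := Real.logb_le_logb_of_le hq1 (hρ _) (hgrow n)
    rwa [Real.logb_mul hq0.ne' (hρ n).ne', Real.logb_self_eq_one hq1] at this
  have hlin : ∀ n : ℕ, u n ≤ n + |u 0| := fun n => by
    induction n with
    | zero => simpa using le_abs_self _
    | succ n ih => push_cast; linarith [hstep n]
  -- boundedness above makes the real-valued `limsup` meaningful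
  have hbdd : IsBoundedUnder (· ≤ ·) atTop (fun n : ℕ => u n / (n + 1)) := by
    refine isBoundedUnder_of ⟨1 + |u 0|, fun n => ?_⟩
    rw [div_le_iff₀ (by positivity)]
    nlinarith [hlin n, abs_nonneg (u 0), (Nat.cast_nonneg n : (0 : ℝ) ≤ n)]
  have hr' : 1 / (r : ℝ) ≤ 1 / 2 :=
    one_div_le_one_div_of_le (by norm_num) (by exact_mod_cast hr)
  have hev : ∀ᶠ n : ℕ in atTop, u n / (n + 1) < 5 / 8 :=
    eventually_lt_of_limsup_lt (by linarith [show limsup (fun n : ℕ => u n / (n + 1)) atTop ≤ _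
      from hlimsup]) hbdd
  by_contra hcon
  rw [not_frequently] at hcon
  obtain ⟨M, hM⟩ := eventually_atTop.1 (hcon.and hev)
  have hbig : ∀ n ≥ M, 3 / 4 * (j : ℝ) + u n ≤ u (n + j) := fun n hn => by
    have h1 := (not_le.1 (hM n hn).1).le
    have := Real.logb_le_logb_of_le hq1 (mul_pos (Real.rpow_pos_of_pos hq0 _) (hρ n)) h1
    rwa [Real.logb_mul (Real.rpow_pos_of_pos hq0 _).ne' (hρ n).ne',
      Real.logb_rpow hq0 hq1.ne'] at this
  have hit : ∀ k : ℕ, 3 / 4 * ((k * j : ℕ) : ℝ) + u M ≤ u (M + k * j) := fun k => by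
    induction k with
    | zero => simp
    | succ k ih =>
      have := hbig (M + k * j) (by omega)
      rw [show M + (k + 1) * j = M + k * j + j by ring]
      push_cast at ih ⊢
      linarith
  obtain ⟨k, hk⟩ := exists_nat_gt (8 * (M + 1 + |u M|) : ℝ)
  have h1 := hit k
  have h2 := (hM (M + k * j) (by omega)).2
  rw [div_lt_iff₀ (by positivity)] at h2
  have h3 : (k : ℝ) ≤ ((k * j : ℕ) : ℝ) := by exact_mod_cast Nat.le_mul_of_pos_right k hj
  push_cast at h1 h2 h3
  have hM0 : (0 : ℝ) ≤ M := Nat.cast_nonneg _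
  linarith [neg_abs_le (u M), abs_nonneg (u M)]

/-- The bound for the coefficient of `x ^ q ^ (i + j)` in `exp_Λ (c x) ^ q ^ j` times the bound for
the corresponding power sum tends to zero. -/
lemma tendsto_termBound {q r j : ℕ} (hq : 2 ≤ q) (hr : 2 ≤ r) (hj : 1 ≤ j) {ρ : ℕ → ℝ}
    (hρ : ∀ i, 0 < ρ i) (hgrow : ∀ n, ρ (n + 1) ≤ (q : ℝ) * ρ n)
    (hlimsup : limsup (fun n : ℕ => Real.logb q (ρ n) / (n + 1)) atTop ≤ 1 / (r : ℝ))
    {γ : ℝ} (hγ0 : 0 < γ) (hγ : γ ≤ (q : ℝ) ^ (-(j : ℤ))) :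
    Tendsto (fun i => γ ^ q ^ (i + j) * normProd q ρ (i + j) / normProd q ρ i ^ q ^ j)
      atTop (𝓝 0) := by
  have hq1 : (1 : ℝ) < q := by exact_mod_cast hq
  have hq0 : (0 : ℝ) < q := by linarith
  have hP := normProd_pos q hρ
  set T : ℕ → ℝ := fun i => γ ^ q ^ (i + j) * normProd q ρ (i + j) / normProd q ρ i ^ q ^ j
    with hTdef
  have hT0 : ∀ i, 0 ≤ T i := fun i => by
    have := hP i; have := hP (i + j); positivity
  have hTs : ∀ i, T (i + 1) = T i * (γ * ρ (i + j) / ρ i) ^ ((q - 1) * q ^ (i + j)) := fun i => by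
    have h1 : γ ^ q ^ (i + 1 + j) = γ ^ q ^ (i + j) * γ ^ ((q - 1) * q ^ (i + j)) := by
      rw [← pow_add, pow_add_sub_one_mul (by omega)]; ring_nf
    have h2 : normProd q ρ (i + 1 + j)
        = normProd q ρ (i + j) * ρ (i + j) ^ ((q - 1) * q ^ (i + j)) := by
      rw [show i + 1 + j = (i + j) + 1 by ring]; rfl
    have h3 : normProd q ρ (i + 1) ^ q ^ j
        = normProd q ρ i ^ q ^ j * ρ i ^ ((q - 1) * q ^ (i + j)) := by
      rw [normProd, mul_pow, ← pow_mul, mul_assoc, pow_add]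
    simp only [hTdef]
    rw [h1, h2, h3, div_pow, mul_pow]
    have := (pow_pos (hP i) (q ^ j)).ne'
    have := (pow_pos (hρ i) ((q - 1) * q ^ (i + j))).ne'
    field_simp
  have hgrowj : ∀ i, ρ (i + j) ≤ (q : ℝ) ^ j * ρ i := fun i => by
    have key : ∀ k, ρ (i + k) ≤ (q : ℝ) ^ k * ρ i := fun k => by
      induction k with
      | zero => simp
      | succ k ih =>
        calc ρ (i + (k + 1)) ≤ q * ρ (i + k) := hgrow _
          _ ≤ q * ((q : ℝ) ^ k * ρ i) := mul_le_mul_of_nonneg_left ih hq0.le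
          _ = _ := by ring
    exact key j
  have hu0 : ∀ i, 0 ≤ γ * ρ (i + j) / ρ i := fun i => by
    have := hρ i; have := hρ (i + j); positivity
  have hγ' : γ * (q : ℝ) ^ j ≤ 1 := by
    calc γ * (q : ℝ) ^ j ≤ (q : ℝ) ^ (-(j : ℤ)) * (q : ℝ) ^ j :=
          mul_le_mul_of_nonneg_right hγ (by positivity)
      _ = 1 := by rw [zpow_neg, zpow_natCast]; exact inv_mul_cancel₀ (by positivity)
  have hu1 : ∀ i, γ * ρ (i + j) / ρ i ≤ 1 := fun i => by
    rw [div_le_one (hρ i)]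
    nlinarith [mul_le_mul_of_nonneg_left (hgrowj i) hγ0.le,
      mul_le_mul_of_nonneg_right hγ' (hρ i).le]
  have hanti : Antitone T := antitone_nat_of_succ_le fun i => by
    rw [hTs]
    exact mul_le_of_le_one_right (hT0 i) (pow_le_one₀ (hu0 i) (hu1 i))
  have hj' : (0 : ℝ) < j := by exact_mod_cast hj
  refine tendsto_zero_of_frequently_contract hT0 hanti
    (θ := (q : ℝ) ^ (-(1 / 4 * (j : ℝ)))) (Real.rpow_lt_one_of_one_lt_of_neg hq1 (by linarith)) ?_
  refine (frequently_ratio_le hq hr hj hρ hgrow hlimsup).mono fun i hi => ?_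
  have hui : γ * ρ (i + j) / ρ i ≤ (q : ℝ) ^ (-(1 / 4 * (j : ℝ))) := by
    rw [div_le_iff₀ (hρ i)]
    calc γ * ρ (i + j) ≤ (q : ℝ) ^ (-(j : ℝ)) * ((q : ℝ) ^ (3 / 4 * (j : ℝ)) * ρ i) := by
          refine mul_le_mul ?_ hi (hρ _).le (by positivity)
          rw [← Real.rpow_intCast] at hγ
          simpa using hγ
      _ = _ := by
          rw [← mul_assoc, ← Real.rpow_add hq0]
          ring_nf
  rw [hTs, mul_comm]
  refine mul_le_mul_of_nonneg_right (le_trans ?_ hui) (hT0 i)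
  exact pow_le_of_le_one (hu0 i) (hu1 i)
    (Nat.mul_ne_zero (by omega) (pow_ne_zero _ (by omega)))
/-! ### Divided differences of monomials -/

lemma dividedDiff_eq_zero {L : Type*} [Field L] [DecidableEq L] (s : Finset L) {k : ℕ}
    (hk : k + 1 < s.card) : ∑ v ∈ s, v ^ k / ∏ u ∈ s.erase v, (v - u) = 0 := by
  have := Lagrange.coeff_eq_sum (s := s) (v := id) (Set.injOn_id _)
    (P := (Polynomial.X : Polynomial L) ^ k)
    (by rw [Polynomial.degree_X_pow]; exact_mod_cast (by omega : k < s.card))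
  rw [Polynomial.coeff_X_pow, if_neg (by omega)] at this
  simpa using this.symm

/-- The divided difference of `x ^ k` over `s` is the complete homogeneous symmetric polynomial of
degree `k + 1 - #s` in the elements of `s`, which gives this bound; the proof uses the Leibniz rule
for multiplication by `x`. -/
lemma norm_dividedDiff_le {L : Type*} [NormedField L] [IsUltrametricDist L] [DecidableEq L]
    {R : ℝ} (hR : 0 ≤ R) (s : Finset L) (hs : s.Nonempty) (hsR : ∀ v ∈ s, ‖v‖ ≤ R) (k : ℕ) :
    ‖∑ v ∈ s, v ^ k / ∏ u ∈ s.erase v, (v - u)‖ * R ^ s.card ≤ R ^ (k + 1) := by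
  induction s using Finset.induction_on generalizing k with
  | empty => simp at hs
  | insert a s ha ih =>
    rcases s.eq_empty_or_nonempty with rfl | hne
    · simp only [insert_empty_eq, Finset.sum_singleton, Finset.card_singleton,
        Finset.erase_singleton, Finset.prod_empty, div_one, pow_one, norm_pow]
      rw [pow_succ]
      exact mul_le_mul_of_nonneg_right (pow_le_pow_left₀ (norm_nonneg _) (hsR a (by simp)) _) hR
    have ih' := ih hne fun v hv => hsR v (Finset.mem_insert_of_mem hv)
    induction k with
    | zero =>
      rw [dividedDiff_eq_zero _ (by rw [Finset.card_insert_of_notMem ha]; have := hne.card_pos; omega)]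
      simpa using hR
    | succ k ihk =>
      have hleib : ∑ v ∈ insert a s, v ^ (k + 1) / ∏ u ∈ (insert a s).erase v, (v - u)
          = a * (∑ v ∈ insert a s, v ^ k / ∏ u ∈ (insert a s).erase v, (v - u))
            + ∑ v ∈ s, v ^ k / ∏ u ∈ s.erase v, (v - u) := by
        rw [← sub_eq_iff_eq_add', Finset.mul_sum, ← Finset.sum_sub_distrib,
          Finset.sum_insert ha]
        rw [show a ^ (k + 1) / ∏ u ∈ (insert a s).erase a, (a - u)
          - a * (a ^ k / ∏ u ∈ (insert a s).erase a, (a - u)) = 0 by ring, zero_add]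
        refine Finset.sum_congr rfl fun v hv => ?_
        have hva : v ≠ a := fun h => ha (h ▸ hv)
        rw [Finset.erase_insert_of_ne hva.symm,
          Finset.prod_insert (fun h => ha (Finset.mem_of_mem_erase h))]
        have h1 : v - a ≠ 0 := sub_ne_zero.2 hva
        have h2 : ∏ u ∈ s.erase v, (v - u) ≠ 0 := Finset.prod_ne_zero_iff.2 fun u hu =>
          sub_ne_zero.2 (Finset.ne_of_mem_erase hu).symm
        field_simp
        ring
      rw [hleib]
      have hpow : 0 ≤ R ^ (insert a s).card := pow_nonneg hR _
      refine (mul_le_mul_of_nonneg_right (IsUltrametricDist.norm_add_le_max _ _) hpow).trans ?_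
      rw [max_mul_of_nonneg _ _ hpow]
      refine max_le ?_ ?_
      · rw [norm_mul, mul_assoc, pow_succ' R]
        exact mul_le_mul (hsR a (by simp)) ihk (mul_nonneg (norm_nonneg _) hpow) hR
      · rw [Finset.card_insert_of_notMem ha, pow_succ, ← mul_assoc, pow_succ R (k + 1)]
        exact mul_le_mul_of_nonneg_right (ih' k) hR

/-! ### The spans of the initial basis vectors as finite sets -/

section Span

variable {Fq L : Type*} [Field Fq] [Fintype Fq]

lemma coe_spanFinset [Field L] [Algebra Fq L] (lam : ℕ → L) (N : ℕ) :
    (spanFinset Fq lam N : Set L) = Submodule.span Fq (Set.range fun i : Fin N => lam i) := by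
  induction N with
  | zero => simp [spanFinset]
  | succ N ih =>
    have hr : (Set.range fun i : Fin (N + 1) => lam i)
        = insert (lam N) (Set.range fun i : Fin N => lam i) := by
      ext x
      simp [Fin.exists_fin_succ', or_comm, eq_comm]
    ext x
    rw [hr, SetLike.mem_coe (p := Submodule.span _ _), Submodule.mem_span_insert]
    simp only [spanFinset, Finset.coe_image, Set.mem_image, Finset.mem_coe, Finset.mem_product,
      Finset.mem_univ, true_and, Prod.exists]
    constructor
    · rintro ⟨a, z, hz, rfl⟩
      exact ⟨a, z, by rw [← SetLike.mem_coe, ← ih]; exact hz, add_comm _ _⟩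
    · rintro ⟨a, z, hz, rfl⟩
      exact ⟨a, z, by rw [← Finset.mem_coe, ih]; exact hz, add_comm _ _⟩

lemma mem_spanFinset [Field L] [Algebra Fq L] {lam : ℕ → L} {N : ℕ} {x : L} :
    x ∈ spanFinset Fq lam N ↔ x ∈ Submodule.span Fq (Set.range fun i : Fin N => lam i) := by
  rw [← Finset.mem_coe, coe_spanFinset, SetLike.mem_coe]

lemma zero_mem_spanFinset [Field L] [Algebra Fq L] (lam : ℕ → L) (N : ℕ) :
    (0 : L) ∈ spanFinset Fq lam N := mem_spanFinset.2 (Submodule.zero_mem _)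

lemma spanFinset_mono [Field L] [Algebra Fq L] (lam : ℕ → L) : Monotone (spanFinset Fq lam) := by
  classical
  refine monotone_nat_of_le_succ fun N x hx => ?_
  exact Finset.mem_image.2 ⟨(0, x), by simpa using hx, by simp⟩

lemma spanFinset_injOn [Field L] [Algebra Fq L] {lam : ℕ → L} {N : ℕ}
    (h : lam N ∉ spanFinset Fq lam N) :
    Set.InjOn (fun p : Fq × L => p.2 + p.1 • lam N)
      (Finset.univ ×ˢ spanFinset Fq lam N : Finset (Fq × L)) := by
  rintro ⟨a, v⟩ hv ⟨b, w⟩ hw hvw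
  simp only [Finset.coe_product, Set.mem_prod, Finset.mem_coe, mem_spanFinset] at hv hw
  rw [mem_spanFinset] at h
  dsimp only at hvw
  have hab : a = b := by
    by_contra hab
    refine h ?_
    have h1 : (a - b) • lam N = w - v := by rw [sub_smul]; linear_combination hvw
    rw [← inv_smul_smul₀ (sub_ne_zero.2 hab) (lam N), h1]
    exact Submodule.smul_mem _ _ (Submodule.sub_mem _ hw.2 hv.2)
  subst hab
  simpa using hvw

lemma card_spanFinset [Field L] [Algebra Fq L] {lam : ℕ → L}
    (h : ∀ N, lam N ∉ spanFinset Fq lam N) (N : ℕ) :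
    (spanFinset Fq lam N).card = Fintype.card Fq ^ N := by
  classical
  induction N with
  | zero => simp [spanFinset]
  | succ N ih =>
    rw [spanFinset, Finset.card_image_of_injOn (spanFinset_injOn (h N)), Finset.card_product, ih,
      Finset.card_univ, pow_succ']

lemma prod_spanFinset_succ [Field L] [Algebra Fq L] {lam : ℕ → L} {N : ℕ}
    (h : lam N ∉ spanFinset Fq lam N) (g : L → L) :
    ∏ v ∈ spanFinset Fq lam (N + 1), g v
      = ∏ a : Fq, ∏ v ∈ spanFinset Fq lam N, g (v + a • lam N) := by
  classical
  rw [spanFinset, Finset.prod_image (spanFinset_injOn h), Finset.prod_product]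

end Span
/-! ### The polynomials vanishing on the initial spans -/

section Vanishing

variable {Fq L : Type*} [Field Fq] [Fintype Fq]

lemma prod_sub_smul [Field L] [Algebra Fq L] (y z : L) :
    ∏ a : Fq, (y - a • z) = y ^ Fintype.card Fq - z ^ (Fintype.card Fq - 1) * y := by
  have hq : 1 < Fintype.card Fq := Fintype.one_lt_card
  rcases eq_or_ne z 0 with rfl | hz
  · simp [Finset.prod_const, zero_pow (by omega : Fintype.card Fq - 1 ≠ 0)]
  have hpoly : ∏ a : Fq, (Polynomial.X - Polynomial.C a)
      = (Polynomial.X ^ Fintype.card Fq - Polynomial.X : Polynomial Fq) := by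
    have hroots := FiniteField.roots_X_pow_card_sub_X Fq
    have := Polynomial.prod_multiset_X_sub_C_of_monic_of_roots_card_eq
      (p := (Polynomial.X ^ Fintype.card Fq - Polynomial.X : Polynomial Fq))
      (Polynomial.monic_X_pow_sub (by rw [Polynomial.degree_X]; exact_mod_cast hq))
      (by rw [hroots, FiniteField.X_pow_card_sub_X_natDegree_eq _ hq]; rfl)
    rw [hroots] at this
    exact this
  have hev := congrArg (Polynomial.aeval (y / z)) hpoly
  simp only [map_prod, map_sub, Polynomial.aeval_X, Polynomial.aeval_C, map_pow] at hev
  have h1 : ∀ a : Fq, y - a • z = z * (y / z - algebraMap Fq L a) := fun a => by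
    rw [Algebra.smul_def]; field_simp
  simp only [h1]
  rw [Finset.prod_mul_distrib, Finset.prod_const, Finset.card_univ, hev, mul_sub, ← mul_pow,
    mul_div_cancel₀ _ hz]
  congr 1
  obtain ⟨k, hk⟩ := Nat.exists_eq_add_of_lt hq
  rw [hk, show 1 + k + 1 - 1 = 1 + k by omega, pow_succ]
  field_simp

variable (Fq) in
lemma sum_pow_card_pow [Field L] [Algebra Fq L] {ι : Type*} (s : Finset ι) (f : ι → L) (j : ℕ) :
    (∑ i ∈ s, f i) ^ Fintype.card Fq ^ j = ∑ i ∈ s, f i ^ Fintype.card Fq ^ j := by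
  induction j with
  | zero => simp
  | succ j ih =>
    simp only [pow_succ (Fintype.card Fq), pow_mul, ih]
    exact map_sum (FiniteField.frobeniusAlgHom Fq L) _ _

lemma sub_smul_pow_card_pow [Field L] [Algebra Fq L] (x y : L) (a : Fq) (j : ℕ) :
    (x - a • y) ^ Fintype.card Fq ^ j
      = x ^ Fintype.card Fq ^ j - a • y ^ Fintype.card Fq ^ j := by
  induction j with
  | zero => simp
  | succ j ih =>
    simp only [pow_succ (Fintype.card Fq), pow_mul, ih]
    have := map_sub (FiniteField.frobeniusAlgHom Fq L) (x ^ Fintype.card Fq ^ j)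
      (a • y ^ Fintype.card Fq ^ j)
    rw [map_smul] at this
    exact this

lemma norm_sub_le_max' [NormedField L] [IsUltrametricDist L] (x y : L) :
    ‖x - y‖ ≤ max ‖x‖ ‖y‖ := by
  simpa [sub_eq_add_neg] using IsUltrametricDist.norm_add_le_max x (-y)

variable [NormedField L] [Algebra Fq L]

lemma norm_prod_erase_zero {lam : ℕ → L} (hnot : ∀ N, lam N ∉ spanFinset Fq lam N)
    (hnew : ∀ N, ∀ x ∈ spanFinset Fq lam (N + 1), x ∉ spanFinset Fq lam N → ‖x‖ = ‖lam N‖)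
    [DecidableEq L] (N : ℕ) :
    ‖∏ v ∈ (spanFinset Fq lam N).erase 0, v‖
      = normProd (Fintype.card Fq) (fun i => ‖lam i‖) N := by
  induction N with
  | zero => simp [spanFinset, normProd]
  | succ N ih =>
    have hsub := spanFinset_mono (Fq := Fq) lam N.le_succ
    rw [← Finset.prod_sdiff (Finset.erase_subset_erase 0 hsub), norm_mul, ih, normProd, mul_comm]
    congr 1
    have hset : (spanFinset Fq lam (N + 1)).erase 0 \ (spanFinset Fq lam N).erase 0
        = spanFinset Fq lam (N + 1) \ spanFinset Fq lam N := by
      ext x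
      have := zero_mem_spanFinset (Fq := Fq) lam N
      simp only [Finset.mem_sdiff, Finset.mem_erase]
      constructor
      · tauto
      · rintro ⟨h1, h2⟩
        exact ⟨⟨fun h => h2 (h ▸ this), h1⟩, fun h => h2 h.2⟩
    rw [hset, norm_prod, Finset.prod_congr rfl fun x hx =>
      hnew N x (Finset.mem_sdiff.1 hx).1 (Finset.mem_sdiff.1 hx).2, Finset.prod_const,
      Finset.card_sdiff_of_subset hsub, card_spanFinset hnot, card_spanFinset hnot, Nat.sub_mul, one_mul,
      pow_succ']

/-- The monic polynomial with root set `spanFinset Fq lam N` is `Fq`-linear, and its coefficients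
satisfy `‖f i‖ ≤ normProd N / normProd i`. The recursion is
`F (N + 1) = F N ^ q - F N (lam N) ^ (q - 1) * F N`. -/
lemma exists_coeffs [IsUltrametricDist L] {lam : ℕ → L}
    (hnot : ∀ N, lam N ∉ spanFinset Fq lam N)
    (hnew : ∀ N, ∀ x ∈ spanFinset Fq lam (N + 1), x ∉ spanFinset Fq lam N → ‖x‖ = ‖lam N‖)
    (hpos : ∀ i, 0 < ‖lam i‖) (hmono : Monotone fun i => ‖lam i‖) (N : ℕ) :
    ∃ f : ℕ → L,
      (∀ x, ∏ v ∈ spanFinset Fq lam N, (x - v)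
        = ∑ i ∈ Finset.range (N + 1), f i * x ^ Fintype.card Fq ^ i) ∧
      (∀ i, N < i → f i = 0) ∧
      ∀ i, ‖f i‖ ≤ normProd (Fintype.card Fq) (fun i => ‖lam i‖) N
        / normProd (Fintype.card Fq) (fun i => ‖lam i‖) i := by
  set q := Fintype.card Fq with hqdef
  have hq : 1 < q := Fintype.one_lt_card
  set P := normProd q (fun i => ‖lam i‖) with hPdef
  have hP : ∀ i, 0 < P i := normProd_pos q hpos
  induction N with
  | zero =>
    refine ⟨fun i => if i = 0 then 1 else 0, fun x => by simp [spanFinset],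
      fun i hi => by simp [hi.ne'], fun i => ?_⟩
    rcases Nat.eq_zero_or_pos i with rfl | hi
    · simp [(hP 0).ne']
    · simp only [hi.ne', if_false, norm_zero]
      exact div_nonneg (hP _).le (hP _).le
  | succ N ih =>
    obtain ⟨f, hf, hf0, hfb⟩ := ih
    set F : L → L := fun x => ∏ v ∈ spanFinset Fq lam N, (x - v) with hF
    have hFlin : ∀ (x y : L) (a : Fq), F (x - a • y) = F x - a • F y := fun x y a => by
      simp only [hF, hf, hqdef, sub_smul_pow_card_pow, mul_sub, Finset.sum_sub_distrib,
        Finset.smul_sum, mul_smul_comm]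
    have hFN : ‖F (lam N)‖ = ‖lam N‖ ^ q ^ N := by
      simp only [hF]
      rw [norm_prod, Finset.prod_congr rfl fun v hv => hnew N (lam N - v) ?_ ?_,
        Finset.prod_const, card_spanFinset hnot]
      · rw [mem_spanFinset]
        exact Submodule.sub_mem _ (Submodule.subset_span ⟨Fin.last N, rfl⟩)
          (mem_spanFinset.1 (spanFinset_mono lam N.le_succ hv))
      · rw [mem_spanFinset] at hv ⊢
        rw [Submodule.sub_mem_iff_left _ hv, ← mem_spanFinset]
        exact hnot N
    have hrec : ∀ x, ∏ v ∈ spanFinset Fq lam (N + 1), (x - v)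
        = F x ^ q - F (lam N) ^ (q - 1) * F x := fun x => by
      rw [prod_spanFinset_succ (hnot N), hqdef, ← prod_sub_smul]
      refine Finset.prod_congr rfl fun a _ => ?_
      rw [← hFlin]
      exact Finset.prod_congr rfl fun v _ => by ring
    refine ⟨fun i => (Nat.casesOn i 0 fun k => f k ^ q) - F (lam N) ^ (q - 1) * f i,
      fun x => ?_, fun i hi => ?_, fun i => ?_⟩
    · rw [hrec]
      simp only [sub_mul, Finset.sum_sub_distrib]
      congr 1
      · rw [Finset.sum_range_succ']
        simp only [hF, hf]
        have := sum_pow_card_pow Fq (Finset.range (N + 1)) (fun i => f i * x ^ q ^ i) 1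
        rw [pow_one] at this
        change _ = _ + (0 : L) * _
        rw [this, zero_mul, add_zero]
        refine Finset.sum_congr rfl fun i _ => ?_
        rw [mul_pow, ← pow_mul, ← pow_succ]
      · rw [Finset.sum_range_succ, hf0 (N + 1) N.lt_succ_self]
        simp only [hF, hf, Finset.mul_sum, mul_assoc, mul_zero, zero_mul, add_zero]
    · obtain ⟨k, rfl⟩ := Nat.exists_eq_add_of_lt (by omega : 0 < i)
      simp only [zero_add] at hi ⊢
      rw [hf0 k (by omega), hf0 (k + 1) (by omega), zero_pow (by omega), mul_zero, sub_zero]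
    · have hP1 : P (N + 1) = ‖F (lam N)‖ ^ (q - 1) * P N := by
        rw [hFN, ← pow_mul, mul_comm, mul_comm (q ^ N)]; rfl
      have h2 : ‖F (lam N) ^ (q - 1) * f i‖ ≤ P (N + 1) / P i := by
        rw [norm_mul, norm_pow, hP1, mul_div_assoc]
        exact mul_le_mul_of_nonneg_left (hfb i) (by positivity)
      cases i with
      | zero => simpa using h2
      | succ k =>
        refine (norm_sub_le_max' _ _).trans (max_le ?_ h2)
        simp only [norm_pow]
        by_cases hk : k ≤ N
        · calc ‖f k‖ ^ q ≤ (P N / P k) ^ q := pow_le_pow_left₀ (norm_nonneg _) (hfb k) _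
            _ ≤ P (N + 1) / P (k + 1) := by
              have hc := normProd_convex q hpos hmono hk
              simp only [← hPdef] at hc
              rw [div_le_div_iff₀ (hP _) (hP _)] at hc
              rw [div_pow, div_le_div_iff₀ (pow_pos (hP _) _) (hP _)]
              linarith
        · rw [hf0 k (by omega), norm_zero, zero_pow (by omega)]
          exact div_nonneg (hP _).le (hP _).le

/-- The nodal weights `∏ (v - u)` of an additive group do not depend on the node `v`. -/
lemma prod_erase_sub [DecidableEq L] (lam : ℕ → L) (N : ℕ) {v : L}
    (hv : v ∈ spanFinset Fq lam N) :
    ∏ u ∈ (spanFinset Fq lam N).erase v, (v - u) = ∏ w ∈ (spanFinset Fq lam N).erase 0, w := by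
  rw [mem_spanFinset] at hv
  refine Finset.prod_nbij' (fun u => v - u) (fun w => v - w) ?_ ?_ ?_ ?_ ?_
  · intro u hu
    simp only [Finset.mem_erase, mem_spanFinset] at hu ⊢
    exact ⟨sub_ne_zero.2 hu.1.symm, Submodule.sub_mem _ hv hu.2⟩
  · intro u hu
    simp only [Finset.mem_erase, mem_spanFinset] at hu ⊢
    exact ⟨by simpa using hu.1, Submodule.sub_mem _ hv hu.2⟩
  all_goals simp

lemma prod_erase_zero_ne_zero [DecidableEq L] (s : Finset L) : ∏ w ∈ s.erase 0, w ≠ 0 :=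
  Finset.prod_ne_zero_iff.2 fun _ hw => Finset.ne_of_mem_erase hw

lemma sum_pow_eq_dividedDiff [DecidableEq L] (lam : ℕ → L) (m k : ℕ) :
    ∑ v ∈ spanFinset Fq lam m, v ^ k = (∏ w ∈ (spanFinset Fq lam m).erase 0, w)
      * ∑ v ∈ spanFinset Fq lam m, v ^ k / ∏ u ∈ (spanFinset Fq lam m).erase v, (v - u) := by
  rw [Finset.mul_sum]
  refine Finset.sum_congr rfl fun v hv => ?_
  rw [prod_erase_sub lam m hv, mul_div_cancel₀ _ (prod_erase_zero_ne_zero _)]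

lemma sum_pow_eq_zero {lam : ℕ → L} (hnot : ∀ N, lam N ∉ spanFinset Fq lam N) {m n : ℕ}
    (hn : n < m) : ∑ v ∈ spanFinset Fq lam m, v ^ (Fintype.card Fq ^ n - 1) = 0 := by
  classical
  have hlt : Fintype.card Fq ^ n < Fintype.card Fq ^ m :=
    Nat.pow_lt_pow_right Fintype.one_lt_card hn
  have hp : 0 < Fintype.card Fq ^ n := pow_pos Fintype.card_pos _
  rw [sum_pow_eq_dividedDiff, dividedDiff_eq_zero _ (by rw [card_spanFinset hnot]; omega), mul_zero]

lemma norm_sum_pow_le [IsUltrametricDist L] {lam : ℕ → L}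
    (hnot : ∀ N, lam N ∉ spanFinset Fq lam N)
    (hnew : ∀ N, ∀ x ∈ spanFinset Fq lam (N + 1), x ∉ spanFinset Fq lam N → ‖x‖ = ‖lam N‖)
    (hpos : ∀ i, 0 < ‖lam i‖) (hmono : Monotone fun i => ‖lam i‖)
    (hbd : ∀ N, ∀ x ∈ spanFinset Fq lam (N + 1), ‖x‖ ≤ ‖lam N‖) {m n : ℕ} (hn : m + 1 ≤ n) :
    ‖∑ v ∈ spanFinset Fq lam (m + 1), v ^ (Fintype.card Fq ^ n - 1)‖
      ≤ normProd (Fintype.card Fq) (fun i => ‖lam i‖) n := by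
  classical
  have hp : 0 < Fintype.card Fq ^ n := pow_pos Fintype.card_pos _
  have hdd := norm_dividedDiff_le (hpos m).le (spanFinset Fq lam (m + 1))
    ⟨0, zero_mem_spanFinset lam _⟩ (hbd m) (Fintype.card Fq ^ n - 1)
  rw [Nat.sub_add_cancel hp, card_spanFinset hnot] at hdd
  have hle := normProd_mul_pow_le (q := Fintype.card Fq) Fintype.card_pos hpos hmono m hn
  have hPm := normProd_pos (Fintype.card Fq) hpos (m + 1)
  have hR : 0 < ‖lam m‖ ^ Fintype.card Fq ^ (m + 1) := pow_pos (hpos m) _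
  rw [sum_pow_eq_dividedDiff, norm_mul, norm_prod_erase_zero hnot hnew]
  refine le_of_mul_le_mul_right ?_ hR
  rw [mul_assoc]
  exact (mul_le_mul_of_nonneg_left hdd hPm.le).trans hle

/-- The product `x ∏ (1 - x / v)` over the nonzero `v` of the `N`-th span is its monic vanishing
polynomial normalized to have derivative `1`. -/
lemma mul_prod_one_sub [DecidableEq L] (lam : ℕ → L) (N : ℕ) (x : L) :
    x * ∏ v ∈ (spanFinset Fq lam N).erase 0, (1 - x / v)
      = (∏ v ∈ spanFinset Fq lam N, (x - v)) / ∏ w ∈ (spanFinset Fq lam N).erase 0, w := by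
  have h0 := zero_mem_spanFinset (Fq := Fq) lam N
  have hneg : ∏ v ∈ (spanFinset Fq lam N).erase 0, (0 - v)
      = ∏ w ∈ (spanFinset Fq lam N).erase 0, w := prod_erase_sub lam N h0
  rw [eq_div_iff (prod_erase_zero_ne_zero _), ← hneg, mul_assoc, ← Finset.prod_mul_distrib,
    ← Finset.mul_prod_erase _ _ h0, sub_zero]
  congr 1
  refine Finset.prod_congr rfl fun v hv => ?_
  have := Finset.ne_of_mem_erase hv
  field_simp
  ring

/-- The key estimate: the sum in the theorem, with `exp_Λ` replaced by the exponential of the `N`-th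
span, is bounded uniformly in `N`. Only terms of degree `q ^ (i + j)` with `i + j > m` contribute,
since the lower power sums over the span of dimension `m + 1` vanish. -/
lemma norm_sum_approx_le [IsUltrametricDist L] [DecidableEq L] {lam : ℕ → L}
    (hnot : ∀ N, lam N ∉ spanFinset Fq lam N)
    (hnew : ∀ N, ∀ x ∈ spanFinset Fq lam (N + 1), x ∉ spanFinset Fq lam N → ‖x‖ = ‖lam N‖)
    (hpos : ∀ i, 0 < ‖lam i‖) (hmono : Monotone fun i => ‖lam i‖)
    (hbd : ∀ N, ∀ x ∈ spanFinset Fq lam (N + 1), ‖x‖ ≤ ‖lam N‖)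
    {j : ℕ} (hj : 1 ≤ j) (c : L) {m : ℕ} {ε : ℝ} (hε : 0 ≤ ε)
    (hT : ∀ i, m + 1 ≤ i + j →
      ‖c‖ ^ Fintype.card Fq ^ (i + j)
        * normProd (Fintype.card Fq) (fun i => ‖lam i‖) (i + j)
        / normProd (Fintype.card Fq) (fun i => ‖lam i‖) i ^ Fintype.card Fq ^ j ≤ ε) (N : ℕ) :
    ‖∑ x ∈ (spanFinset Fq lam (m + 1)).erase 0,
      (c * x * ∏ v ∈ (spanFinset Fq lam N).erase 0, (1 - c * x / v)) ^ Fintype.card Fq ^ j / x‖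
        ≤ ε := by
  obtain ⟨f, hf, -, hfb⟩ := exists_coeffs hnot hnew hpos hmono N
  set q := Fintype.card Fq with hqdef
  have hq : 1 < q := Fintype.one_lt_card
  set P := normProd q (fun i => ‖lam i‖) with hPdef
  have hP : ∀ i, 0 < P i := normProd_pos q hpos
  set δ := ∏ w ∈ (spanFinset Fq lam N).erase 0, w with hδ
  have hδP : ‖δ‖ = P N := norm_prod_erase_zero hnot hnew N
  have hqn : ∀ n : ℕ, 0 < n → 1 < q ^ n := fun n hn => Nat.one_lt_pow hn.ne' hq
  have hterm : ∀ x ∈ (spanFinset Fq lam (m + 1)).erase 0,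
      (c * x * ∏ v ∈ (spanFinset Fq lam N).erase 0, (1 - c * x / v)) ^ q ^ j / x
      = ∑ i ∈ Finset.range (N + 1),
        (f i / δ) ^ q ^ j * c ^ q ^ (i + j) * x ^ (q ^ (i + j) - 1) := fun x hx => by
    have hx0 := Finset.ne_of_mem_erase hx
    rw [mul_prod_one_sub, hf, Finset.sum_div, sum_pow_card_pow Fq, Finset.sum_div]
    refine Finset.sum_congr rfl fun i _ => ?_
    rw [div_eq_iff hx0, mul_assoc _ (x ^ _) x, ← pow_succ,
      Nat.sub_add_cancel (hqn (i + j) (by omega)).le, mul_div_right_comm, mul_pow, ← pow_mul,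
      ← pow_add, mul_pow, mul_assoc]
  rw [Finset.sum_congr rfl hterm, Finset.sum_comm]
  refine IsUltrametricDist.norm_sum_le_of_forall_le_of_nonneg hε fun i _ => ?_
  have hz : (0 : L) ^ (q ^ (i + j) - 1) = 0 :=
    zero_pow (by have := hqn (i + j) (by omega); omega)
  rw [← Finset.mul_sum, Finset.sum_erase (f := fun x : L => x ^ (q ^ (i + j) - 1)) _ hz]
  rcases lt_or_ge (i + j) (m + 1) with h | h
  · rw [sum_pow_eq_zero hnot h, mul_zero, norm_zero]
    exact hε
  · refine le_trans ?_ (hT i h)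
    have h1 : ‖f i / δ‖ ≤ 1 / P i := by
      rw [norm_div, hδP, div_le_iff₀ (hP N)]
      refine (hfb i).trans (le_of_eq (by ring))
    have h2 := norm_sum_pow_le hnot hnew hpos hmono hbd h
    rw [norm_mul, norm_mul, norm_pow, norm_pow]
    calc ‖f i / δ‖ ^ q ^ j * ‖c‖ ^ q ^ (i + j) * _
        ≤ (1 / P i) ^ q ^ j * ‖c‖ ^ q ^ (i + j) * P (i + j) := by
          refine mul_le_mul ?_ h2 (norm_nonneg _) ?_
          · exact mul_le_mul_of_nonneg_right (pow_le_pow_left₀ (norm_nonneg _) h1 _) (by positivity)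
          · have := hP i; positivity
      _ = _ := by rw [div_pow, one_pow]; ring

end Vanishing
/-! ### Convergence of the product -/

/-- In a complete nonarchimedean field, `∏ (1 + f i)` converges unconditionally as soon as `f i`
tends to zero: the expanded products over finite sets tend to zero along the cofinite filter. -/
lemma multipliable_one_add_of_tendsto_zero {L ι : Type*} [NormedField L] [IsUltrametricDist L]
    [CompleteSpace L] {f : ι → L} (hf : Tendsto f cofinite (𝓝 0)) :
    Multipliable fun i => 1 + f i := by
  classical
  refine multipliable_one_add_of_summable_prod ?_
  refine NonarchimedeanAddGroup.summable_of_tendsto_cofinite_zero ?_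
  rw [Metric.tendsto_nhds] at hf ⊢
  simp only [dist_zero_right, eventually_cofinite, not_lt] at hf ⊢
  intro ε hε
  set A := (hf 1 one_pos).toFinset with hA
  set C : ℝ := ∏ i ∈ A, max 1 ‖f i‖ with hC
  have hone : ∀ s : Finset ι, 1 ≤ ∏ i ∈ s, max 1 ‖f i‖ := fun s =>
    Finset.one_le_prod fun i _ => le_max_left _ _
  have hC1 : 1 ≤ C := hone A
  have hC0 : 0 < C := by linarith
  have hprod : ∀ s : Finset ι, ∏ i ∈ s, ‖f i‖ ≤ C := fun s => by
    calc ∏ i ∈ s, ‖f i‖ ≤ ∏ i ∈ s, (if i ∈ A then max 1 ‖f i‖ else 1) := by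
          refine Finset.prod_le_prod (fun _ _ => norm_nonneg _) fun i _ => ?_
          split_ifs with h
          · exact le_max_right _ _
          · simp only [hA, Set.Finite.mem_toFinset, Set.mem_ofPred_eq, not_le] at h
            exact h.le
      _ = ∏ i ∈ s ∩ A, max 1 ‖f i‖ := by rw [Finset.prod_ite_mem]
      _ ≤ C := by
          rw [hC, ← Finset.prod_sdiff (Finset.inter_subset_right (s₁ := s) (s₂ := A))]
          exact le_mul_of_one_le_left (zero_le_one.trans (hone _)) (hone _)
  refine ((hf (ε / C) (by positivity)).toFinset.powerset.finite_toSet).subset fun s hs => ?_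
  simp only [Set.mem_ofPred_eq, norm_prod] at hs
  simp only [Finset.coe_powerset, Set.mem_preimage, Set.mem_powerset_iff, Set.Finite.coe_toFinset]
  intro i hi
  by_contra hlt
  simp only [Set.mem_ofPred_eq, not_le] at hlt
  rw [← Finset.mul_prod_erase _ _ (Finset.mem_coe.1 hi)] at hs
  have h1 : ‖f i‖ * ∏ k ∈ s.erase i, ‖f k‖ ≤ ‖f i‖ * C :=
    mul_le_mul_of_nonneg_left (hprod _) (norm_nonneg _)
  have h2 : ‖f i‖ * C < ε := by rwa [lt_div_iff₀ hC0] at hlt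
  linarith

/-! ### Ordered bases -/

section OrderedBasis

variable {Fq L : Type*} [Field Fq] [Fintype Fq] [NormedField L] [Algebra Fq L]
  {Λ : Submodule Fq L} {lam : ℕ → L}

lemma IsOrderedBasis.notMem (h : IsOrderedBasis Fq Λ lam) (N : ℕ) :
    lam N ∉ spanFinset Fq lam N := by
  rw [mem_spanFinset]; exact (h N).2.1

lemma IsOrderedBasis.mem_of_mem_spanFinset (h : IsOrderedBasis Fq Λ lam) {N : ℕ} {x : L}
    (hx : x ∈ spanFinset Fq lam N) : x ∈ Λ := by
  rw [mem_spanFinset] at hx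
  refine (Submodule.span_le.2 ?_) hx
  rintro _ ⟨i, rfl⟩
  exact (h i).1

lemma IsOrderedBasis.monotone (h : IsOrderedBasis Fq Λ lam) : Monotone fun i => ‖lam i‖ := by
  refine monotone_nat_of_le_succ fun N => (h N).2.2 _ (h (N + 1)).1 fun hmem => ?_
  rw [← mem_spanFinset] at hmem
  exact h.notMem (N + 1) (spanFinset_mono lam N.le_succ hmem)

lemma IsOrderedBasis.norm_pos (h : IsOrderedBasis Fq Λ lam) (N : ℕ) : 0 < ‖lam N‖ := by
  rw [norm_pos_iff]
  intro h0
  exact h.notMem N (h0 ▸ zero_mem_spanFinset lam N)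

lemma IsOrderedBasis.norm_le [IsUltrametricDist L]
    (htriv : ∀ c : Fq, c ≠ 0 → ‖algebraMap Fq L c‖ = 1)
    (h : IsOrderedBasis Fq Λ lam) (N : ℕ) :
    ∀ x ∈ spanFinset Fq lam (N + 1), ‖x‖ ≤ ‖lam N‖ := by
  classical
  have hsm : ∀ (a : Fq) (x : L), ‖a • x‖ ≤ ‖x‖ := fun a x => by
    rw [Algebra.smul_def, norm_mul]
    rcases eq_or_ne a 0 with rfl | ha
    · simp
    · rw [htriv a ha, one_mul]
  have key : ∀ M R, (∀ i < M, ‖lam i‖ ≤ R) → 0 ≤ R → ∀ x ∈ spanFinset Fq lam M, ‖x‖ ≤ R := by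
    intro M R
    induction M with
    | zero => intro _ hR x hx; simp only [spanFinset, Finset.mem_singleton] at hx; simpa [hx]
    | succ M ih =>
      intro hM hR x hx
      simp only [spanFinset, Finset.mem_image, Finset.mem_product, Finset.mem_univ, true_and,
        Prod.exists] at hx
      obtain ⟨a, v, hv, rfl⟩ := hx
      exact (IsUltrametricDist.norm_add_le_max _ _).trans (max_le
        (ih (fun i hi => hM i (by omega)) hR v hv) ((hsm _ _).trans (hM M M.lt_succ_self)))
  exact key (N + 1) _ (fun i hi => h.monotone (by omega : i ≤ N)) (norm_nonneg _)

lemma IsOrderedBasis.norm_eq [IsUltrametricDist L]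
    (htriv : ∀ c : Fq, c ≠ 0 → ‖algebraMap Fq L c‖ = 1)
    (h : IsOrderedBasis Fq Λ lam) (N : ℕ) (x : L) (hx : x ∈ spanFinset Fq lam (N + 1))
    (hx' : x ∉ spanFinset Fq lam N) : ‖x‖ = ‖lam N‖ :=
  le_antisymm (h.norm_le htriv N x hx)
    ((h N).2.2 x (h.mem_of_mem_spanFinset hx) (by rwa [← mem_spanFinset]))

lemma IsOrderedBasis.exists_mem_spanFinset (hΛ : IsLocallyFiniteSubspace Fq Λ)
    (h : IsOrderedBasis Fq Λ lam) {x : L} (hx : x ∈ Λ) : ∃ N, x ∈ spanFinset Fq lam N := by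
  by_contra hcon
  push Not at hcon
  have hle : ∀ N, ‖lam N‖ ≤ ‖x‖ := fun N => (h N).2.2 x hx (by rw [← mem_spanFinset]; exact hcon N)
  have hinj : Function.Injective lam := by
    have key : ∀ a b, a < b → lam a ≠ lam b := fun a b hab heq => h.notMem b (by
      rw [← heq, mem_spanFinset]
      exact Submodule.subset_span ⟨⟨a, hab⟩, rfl⟩)
    intro a b heq
    by_contra hne
    rcases lt_or_gt_of_ne hne with hab | hab
    · exact key a b hab heq
    · exact key b a hab heq.symm
  exact Set.infinite_of_injective_forall_mem hinj
    (fun N => (⟨(h N).1, hle N⟩ : lam N ∈ {y : L | y ∈ Λ ∧ ‖y‖ ≤ ‖x‖}))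
    (hΛ _ ((h.norm_pos 0).trans_le (hle 0)))

/-- The exponentials of the initial spans converge pointwise to the exponential of `Λ`. -/
lemma IsOrderedBasis.tendsto_exp [IsUltrametricDist L] [CompleteSpace L] [DecidableEq L]
    (hΛ : IsLocallyFiniteSubspace Fq Λ) (h : IsOrderedBasis Fq Λ lam) (x : L) :
    Tendsto (fun N => x * ∏ v ∈ (spanFinset Fq lam N).erase 0, (1 - x / v)) atTop
      (𝓝 (x * ∏' l : ↥((Λ : Set L) \ {0}), (1 - x / (l : L)))) := by
  classical
  refine Tendsto.const_mul x ?_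
  have hf : Tendsto (fun l : ↥((Λ : Set L) \ {0}) => -(x / (l : L))) cofinite (𝓝 0) := by
    rw [Metric.tendsto_nhds]
    intro ε hε
    simp only [dist_zero_right, norm_neg, eventually_cofinite, not_lt]
    refine Set.Finite.of_finite_image (f := Subtype.val) ?_ Subtype.val_injective.injOn
    refine (hΛ (‖x‖ / ε + 1) (by positivity)).subset ?_
    rintro _ ⟨⟨l, hl⟩, hlε, rfl⟩
    have hl0 : 0 < ‖l‖ := norm_pos_iff.2 hl.2
    refine ⟨hl.1, ?_⟩
    simp only [Set.mem_ofPred_eq, norm_div] at hlε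
    rw [le_div_iff₀ hl0] at hlε
    have : ‖l‖ ≤ ‖x‖ / ε := by rw [le_div_iff₀ hε]; linarith
    linarith
  have hprod := (multipliable_one_add_of_tendsto_zero hf).hasProd
  simp only [← sub_eq_add_neg] at hprod
  set S : ℕ → Finset ↥((Λ : Set L) \ {0}) := fun N =>
    ((spanFinset Fq lam N).erase 0).subtype (· ∈ (Λ : Set L) \ {0}) with hS
  have hSt : Tendsto S atTop atTop := by
    refine tendsto_atTop_finset_of_monotone (fun M N hMN l hl => ?_) fun l => ?_
    · simp only [hS, Finset.mem_subtype, Finset.mem_erase] at hl ⊢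
      exact ⟨hl.1, spanFinset_mono lam hMN hl.2⟩
    · obtain ⟨N, hN⟩ := h.exists_mem_spanFinset hΛ l.2.1
      exact ⟨N, by simp only [hS, Finset.mem_subtype, Finset.mem_erase]; exact ⟨l.2.2, hN⟩⟩
  refine (hprod.comp hSt).congr fun N => ?_
  simp only [Function.comp, hS]
  refine Finset.prod_subtype_of_mem (fun v => 1 - x / v) fun v hv => ?_
  exact ⟨h.mem_of_mem_spanFinset (Finset.mem_of_mem_erase hv), Finset.ne_of_mem_erase hv⟩

end OrderedBasis


/-- Let `r ≥ 2`, `j ≥ 1`, and let `Λ ⊆ L` be an infinite-dimensional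
locally finite subspace whose norm sequence `(r_i)` (here `r_{i+1} = ‖λ_i‖`, 0-based) satisfies
`r_{i+1} ≤ q·r_i` and `limsup_i log_q(r_i)/i ≤ 1/r`, and let
`exp_Λ(x) := x·∏_{λ ∈ Λ∖{0}} (1 − x/λ)`.  Then for every `c ∈ L` with `0 < ‖c‖ ≤ q^{−j}`,
with `Λ_m := span{λ_1, …, λ_m}`,
`lim_{m → ∞} ∑_{λ ∈ Λ_m ∖ {0}} exp_Λ(cλ)^{q^j}/λ = 0`. -/
theorem stmt10 {Fq L : Type*} [Field Fq] [Fintype Fq] [NormedField L] [IsUltrametricDist L]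
    [CompleteSpace L] [Algebra Fq L]
    (htriv : ∀ c : Fq, c ≠ 0 → ‖algebraMap Fq L c‖ = 1)
    (r j : ℕ) (hr : 2 ≤ r) (hj : 1 ≤ j)
    (Λ : Submodule Fq L) (hΛ : IsLocallyFiniteSubspace Fq Λ)
    (hinf : ¬ Module.Finite Fq Λ)
    (lam : ℕ → L) (hlam : IsOrderedBasis Fq Λ lam)
    (hgrow : ∀ n : ℕ, ‖lam (n + 1)‖ ≤ (Fintype.card Fq : ℝ) * ‖lam n‖)
    (hlimsup : Filter.limsup
        (fun n : ℕ => Real.logb (Fintype.card Fq) ‖lam n‖ / (n + 1)) atTop ≤ 1 / (r : ℝ))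
    (expΛ : L → L)
    (hexp : ∀ x, expΛ x = x * ∏' l : ↥((Λ : Set L) \ {0}), (1 - x / (l : L)))
    (c : L) (hc0 : 0 < ‖c‖) (hc : ‖c‖ ≤ (Fintype.card Fq : ℝ) ^ (-(j : ℤ))) :
    Tendsto
      (fun m : ℕ =>
        ∑ᶠ x ∈ ((Submodule.span Fq (Set.range fun i : Fin m => lam i) : Set L) \ {0}),
          expΛ (c * x) ^ (Fintype.card Fq ^ j) / x)
      atTop (𝓝 0) := by
  classical
  have hmono := hlam.monotone
  have hpos := hlam.norm_pos
  have hsum : ∀ m, (∑ᶠ x ∈ ((Submodule.span Fq (Set.range fun i : Fin m => lam i) : Set L) \ {0}),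
      expΛ (c * x) ^ (Fintype.card Fq ^ j) / x)
      = ∑ x ∈ (spanFinset Fq lam m).erase 0, expΛ (c * x) ^ (Fintype.card Fq ^ j) / x := fun m => by
    rw [← coe_spanFinset, ← Finset.coe_erase, finsum_mem_coe_finset]
  simp only [hsum]
  have hT := tendsto_termBound (Fintype.one_lt_card (α := Fq)) hr hj hpos hgrow hlimsup hc0 hc
  rw [Metric.tendsto_atTop]
  intro ε hε
  obtain ⟨i₀, hi₀⟩ := Metric.tendsto_atTop.1 hT (ε / 2) (by linarith)
  refine ⟨i₀ + j + 1, fun n hn => ?_⟩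
  obtain ⟨m, rfl⟩ : ∃ m, n = m + 1 := ⟨n - 1, by omega⟩
  rw [dist_zero_right]
  refine lt_of_le_of_lt ?_ (half_lt_self hε)
  have hlim : Tendsto (fun N => ∑ x ∈ (spanFinset Fq lam (m + 1)).erase 0,
      (c * x * ∏ v ∈ (spanFinset Fq lam N).erase 0, (1 - c * x / v)) ^ Fintype.card Fq ^ j / x)
      atTop (𝓝 (∑ x ∈ (spanFinset Fq lam (m + 1)).erase 0,
        expΛ (c * x) ^ (Fintype.card Fq ^ j) / x)) := by
    refine tendsto_finsetSum _ fun x _ => ?_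
    rw [hexp]
    exact ((hlam.tendsto_exp hΛ (c * x)).pow _).div_const x
  refine le_of_tendsto' hlim.norm fun N => ?_
  refine norm_sum_approx_le hlam.notMem (hlam.norm_eq htriv) hpos hmono (hlam.norm_le htriv) hj c
    (by linarith) (fun i hi => ?_) N
  have := hi₀ i (by omega)
  rw [Real.dist_eq, sub_zero] at this
  exact (le_abs_self _).trans this.le
end

section
/- Let r ≥ 1 be an integer, let θ ∈ L with ‖θ‖ = q, and let π_1,…,π_r ∈ L∖{0}. Suppose the elements {π_i·θ^n : 1 ≤ i ≤ r, n ≥ 0} are F_q-linearly independent, and that their F_q-linear span Λ ⊆ L is a locally finite subspace. Then the norm sequence (r_i)_{i≥1} of Λ satisfies limsup_{i→∞} log_q(r_i)/i ≤ 1/r. -/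
/-!
The norm `‖v n‖` is controlled by dimension counting. The `r * (n / r + 1) > n` elements
`π i * θ ^ k` with `k ≤ n / r` are linearly independent, so one of them lies outside the span of
`v 0, …, v (n - 1)`. Minimality of `v n` (`exists_norm_le`) gives `‖v n‖ ≤ C * q ^ (n / r)` with
`C` independent of `n`, hence `log_q ‖v n‖ ≤ log_q C + n / r`; dividing by `n + 1` and letting
`n → ∞` yields the bound. The real-valued `limsup` also has to be known to be bounded below, which
follows from `‖v 0‖ ≤ ‖v n‖`.
-/

open Filter Topology

/-- Dimension count: among the first `n / r + 1` powers of `θ` there is one, with some `i`, for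
which `π i * θ ^ k` is not spanned by `v 0, …, v (n - 1)`, so that it bounds `‖v n‖`. -/
lemma exists_norm_le {Fq L : Type*} [Field Fq] [NormedField L] [Algebra Fq L]
    {r : ℕ} (hr : 1 ≤ r) {θ : L} {π : Fin r → L}
    (hind : LinearIndependent Fq (fun p : Fin r × ℕ => π p.1 * θ ^ p.2)) {v : ℕ → L}
    (hv : IsOrderedBasis Fq
      (Submodule.span Fq (Set.range fun p : Fin r × ℕ => π p.1 * θ ^ p.2)) v) (n : ℕ) :
    ∃ i, ∃ k ≤ n / r, ‖v n‖ ≤ ‖π i * θ ^ k‖ := by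
  by_contra! hcon
  have hmem : ∀ p : Fin r × Fin (n / r + 1), π p.1 * θ ^ (p.2 : ℕ) ∈
      Submodule.span Fq (Set.range fun i : Fin n => v i) := by
    intro p
    by_contra hp
    exact absurd ((hv n).2.2 _ (Submodule.subset_span ⟨(p.1, (p.2 : ℕ)), rfl⟩) hp)
      (not_le.mpr (hcon p.1 p.2 (Nat.lt_succ_iff.mp p.2.2)))
  have hli : LinearIndependent Fq
      (fun p : Fin r × Fin (n / r + 1) => π p.1 * θ ^ (p.2 : ℕ)) :=
    hind.comp (fun p : Fin r × Fin (n / r + 1) => (p.1, (p.2 : ℕ))) (by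
      rintro ⟨a, b⟩ ⟨c, d⟩ h
      simpa [Fin.ext_iff] using h)
  have : FiniteDimensional Fq (Submodule.span Fq (Set.range fun i : Fin n => v i)) :=
    FiniteDimensional.span_of_finite Fq (Set.finite_range _)
  have h1 := Submodule.finrank_mono (Submodule.span_le.mpr (Set.range_subset_iff.mpr hmem))
  rw [finrank_span_eq_card hli] at h1
  have h2 : Module.finrank Fq (Submodule.span Fq (Set.range fun i : Fin n => v i)) ≤ n := by
    simpa [Set.finrank] using finrank_range_le_card (R := Fq) (fun i : Fin n => v i)
  have h3 := Nat.lt_mul_div_succ n hr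
  simp only [Fintype.card_prod, Fintype.card_fin] at h1
  omega

/-- Let `r ≥ 1`, `θ ∈ L` with `‖θ‖ = q` and `π_1, …, π_r ∈ L ∖ {0}`.
If the elements `π_i·θ^n` (`1 ≤ i ≤ r`, `n ≥ 0`) are `Fq`-linearly independent and their span
`Λ` is a locally finite subspace, then the norm sequence `(r_i)` of `Λ` (here `r_{i+1} = ‖v i‖`
for an ordered basis `v`, 0-based) satisfies `limsup_i log_q(r_i)/i ≤ 1/r`. -/
theorem stmt11 {Fq L : Type*} [Field Fq] [Fintype Fq] [NormedField L] [IsUltrametricDist L]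
    [CompleteSpace L] [Algebra Fq L]
    (htriv : ∀ c : Fq, c ≠ 0 → ‖algebraMap Fq L c‖ = 1)
    (r : ℕ) (hr : 1 ≤ r) (θ : L) (hθ : ‖θ‖ = (Fintype.card Fq : ℝ))
    (π : Fin r → L) (hπ : ∀ i, π i ≠ 0)
    (hind : LinearIndependent Fq (fun p : Fin r × ℕ => π p.1 * θ ^ p.2))
    (hloc : IsLocallyFiniteSubspace Fq
      (Submodule.span Fq (Set.range fun p : Fin r × ℕ => π p.1 * θ ^ p.2)))
    (v : ℕ → L)
    (hv : IsOrderedBasis Fq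
      (Submodule.span Fq (Set.range fun p : Fin r × ℕ => π p.1 * θ ^ p.2)) v) :
    Filter.limsup (fun n : ℕ => Real.logb (Fintype.card Fq) ‖v n‖ / (n + 1)) atTop
      ≤ 1 / (r : ℝ) := by
  have hq : (1 : ℝ) < Fintype.card Fq := by exact_mod_cast Fintype.one_lt_card (α := Fq)
  set q : ℝ := (Fintype.card Fq : ℝ)
  have hq0 : 0 < q := by linarith
  have hr0 : (0 : ℝ) < r := by exact_mod_cast hr
  set C : ℝ := ∑ i, ‖π i‖ with hC
  have hle : ∀ i, ‖π i‖ ≤ C := fun i =>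
    Finset.single_le_sum (f := fun i => ‖π i‖) (fun _ _ => norm_nonneg _) (Finset.mem_univ i)
  have hC0 : 0 < C := (norm_pos_iff.mpr (hπ ⟨0, hr⟩)).trans_le (hle _)
  have hne : ∀ n, v n ≠ 0 := fun n h => (hv n).2.1 (h ▸ Submodule.zero_mem _)
  have hpos : ∀ n, 0 < ‖v n‖ := fun n => norm_pos_iff.mpr (hne n)
  have hlow : ∀ n, ‖v 0‖ ≤ ‖v n‖ := fun n => (hv 0).2.2 _ (hv n).1 (by simpa using hne n)
  have hup : ∀ n : ℕ, Real.logb q ‖v n‖ ≤ Real.logb q C + n / r := by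
    intro n
    obtain ⟨i, k, hk, h⟩ := exists_norm_le hr hind hv n
    rw [norm_mul, norm_pow, hθ] at h
    have h' : ‖v n‖ ≤ C * q ^ (n / r) :=
      h.trans (mul_le_mul (hle i) (pow_le_pow_right₀ hq.le hk) (by positivity) hC0.le)
    calc Real.logb q ‖v n‖ ≤ Real.logb q (C * q ^ (n / r)) :=
          Real.logb_le_logb_of_le hq (hpos n) h'
      _ = Real.logb q C + (n / r : ℕ) := by
          rw [Real.logb_mul hC0.ne' (by positivity), Real.logb_pow, Real.logb_self_eq_one hq,
            mul_one]
      _ ≤ _ := by gcongr; exact Nat.cast_div_le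
  have hlim : Tendsto (fun n : ℕ => (Real.logb q C + n / r) / ((n : ℝ) + 1)) atTop
      (𝓝 (1 / (r : ℝ))) := by
    have h0 := ((tendsto_one_div_add_atTop_nhds_zero_nat (𝕜 := ℝ)).const_mul
      (Real.logb q C - 1 / r)).add_const (1 / (r : ℝ))
    rw [mul_zero, zero_add] at h0
    refine h0.congr fun n => ?_
    have : (n : ℝ) + 1 ≠ 0 := by positivity
    field_simp
    ring
  rw [← hlim.limsup_eq]
  refine Filter.limsup_le_limsup (Eventually.of_forall fun n => ?_) ?_ hlim.isBoundedUnder_le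
  · exact div_le_div_of_nonneg_right (hup n) (by positivity)
  · refine Filter.IsCoboundedUnder.of_frequently_ge (a := -|Real.logb q ‖v 0‖|)
      (Eventually.of_forall fun n => ?_).frequently
    have hn : (1 : ℝ) ≤ (n : ℝ) + 1 := by simp
    rw [le_div_iff₀ (by positivity)]
    have h1 := Real.logb_le_logb_of_le hq (hpos 0) (hlow n)
    have h2 := neg_abs_le (Real.logb q ‖v 0‖)
    nlinarith [abs_nonneg (Real.logb q ‖v 0‖)]
end

section
/- Let I ⊆ ℤ and for each i ∈ I let a_i ∈ F_q((t)) be an element with ord(a_i) = −i (so ‖a_i‖ = q^{i}). Then for every i ∈ I the set S_i := {μ ∈ F_q((t)) : coeff_{−1}(μ·a_j) = δ_{ij} for all j ∈ I} is nonempty, and min{‖μ‖ : μ ∈ S_i} = q^{1−i}. In particular, if i < i' are both in I then the minimal norm for i' is strictly smaller than the minimal norm for i; i.e., the norms of the dual basis elements a_i^* are strictly decreasing in the degree i. -/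
/-! The condition `coeff_{-1}(μ * a_j) = δ_{ij}` for `j = i` forces `ord(μ) + ord(a_i) ≤ -1`,
i.e. `ord(μ) ≤ i - 1`; this is the lower bound on the norm (`order_le_of_coeff_mul_ne_zero`).

For the converse, look for `μ = t^{i-1} f` with `f` a power series, and write
`a_j = t^{-j} P_j` with `P_j` a power series with nonzero constant term. Then
`coeff_{-1}(μ * a_j) = coeff_{j-i}(f * P_j)`. It vanishes for `j < i`, and for `j = i + k` the
condition reads `coeff_k(f * P_{i+k}) = δ_{k0}`. This is a triangular linear system in the
coefficients of `f` with nonzero diagonal entries `P_{i+k}(0)`, so it is solved recursively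
(`exists_coeff_mul_eq`). Indices outside of `I` impose no condition. -/

open scoped Classical

/-- The absolute value on `F_q((t))`: `‖p‖ = q^{−ord(p)}` for `p ≠ 0`, and `‖0‖ = 0`. -/
noncomputable def lnorm (Fq : Type*) [Field Fq] [Fintype Fq] (p : LaurentSeries Fq) : ℝ :=
  if p = 0 then 0 else (Fintype.card Fq : ℝ) ^ (-(p.order))

/-- Forward substitution for the triangular system `∑_{l ≤ k} x_l * coeff_{k-l}(P k) = d k`.
If `P k` has zero constant term, then the value at `k` is the junk value `0`. -/
noncomputable def triangularSolution {K : Type*} [Field K] (P : ℕ → PowerSeries K) (d : ℕ → K) :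
    ℕ → K
  | k => (d k - ∑ l : Fin k, triangularSolution P d l * PowerSeries.coeff (k - l) (P k)) /
      PowerSeries.coeff 0 (P k)

/-- One power series `f` can be chosen with prescribed `k`-th coefficient of `f * P k`, for all `k`
such that `P k` has nonzero constant term. -/
theorem exists_coeff_mul_eq {K : Type*} [Field K] (P : ℕ → PowerSeries K) (d : ℕ → K) :
    ∃ f : PowerSeries K, ∀ k, PowerSeries.coeff 0 (P k) ≠ 0 →
      PowerSeries.coeff k (f * P k) = d k := by
  refine ⟨PowerSeries.mk (triangularSolution P d), fun k hk => ?_⟩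
  rw [PowerSeries.coeff_mul, Finset.Nat.sum_antidiagonal_eq_sum_range_succ_mk,
    Finset.sum_range_succ]
  simp only [PowerSeries.coeff_mk, Nat.sub_self]
  -- Only the last summand is unfolded; it contains the other ones with the opposite sign.
  have h := triangularSolution.eq_1 P d k
  rw [Fin.sum_univ_eq_sum_range
    (fun l => triangularSolution P d l * PowerSeries.coeff (k - l) (P k)) k, eq_div_iff hk] at h
  rw [h]
  ring

theorem order_le_of_coeff_mul_ne_zero {K : Type*} [Field K] {μ x : LaurentSeries K} {n : ℤ}
    (h : (μ * x).coeff n ≠ 0) : μ ≠ 0 ∧ μ.order ≤ n - x.order := by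
  have hμ : μ ≠ 0 := by rintro rfl; simp at h
  have hx : x ≠ 0 := by rintro rfl; simp at h
  have := HahnSeries.order_le_of_coeff_ne_zero h
  rw [HahnSeries.order_mul hμ hx] at this
  exact ⟨hμ, by linarith⟩

theorem coeff_single_mul_coe_mul {K : Type*} [Field K] (n m : ℤ) (f : PowerSeries K)
    (x : LaurentSeries K) :
    (HahnSeries.single n 1 * (f : LaurentSeries K) * x).coeff m =
      ((f * x.powerSeriesPart : PowerSeries K) : LaurentSeries K).coeff (m - n - x.order) := by
  conv_lhs => rw [← LaurentSeries.single_order_mul_powerSeriesPart x]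
  rw [PowerSeries.coe_mul, mul_assoc, HahnSeries.coeff_single_mul, mul_left_comm,
    HahnSeries.coeff_single_mul, one_mul, one_mul]

/-- Let `I ⊆ ℤ` and for `i ∈ I` let `a_i ∈ F_q((t))` with `ord(a_i) = −i`.
Then for every `i ∈ I` the set `S_i` of `μ ∈ F_q((t))` with `coeff_{−1}(μ·a_j) = δ_{ij}` for
all `j ∈ I` is nonempty, and the minimum of `‖μ‖` over `S_i` equals `q^{1−i}` (expressed by
`IsLeast` for the set of attained norms).  In particular these minimal norms are strictly
decreasing in `i`. -/
theorem stmt13 {Fq : Type*} [Field Fq] [Fintype Fq] (I : Set ℤ)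
    (a : ℤ → LaurentSeries Fq) (ha : ∀ i ∈ I, a i ≠ 0 ∧ (a i).order = -i) :
    (∀ i ∈ I,
      IsLeast {x : ℝ | ∃ μ : LaurentSeries Fq,
          (∀ j ∈ I, (μ * a j).coeff (-1) = if i = j then 1 else 0) ∧ lnorm Fq μ = x}
        ((Fintype.card Fq : ℝ) ^ (1 - i))) ∧
    ∀ i ∈ I, ∀ i' ∈ I, i < i' →
      (Fintype.card Fq : ℝ) ^ (1 - i') < (Fintype.card Fq : ℝ) ^ (1 - i) := by
  have hq : (1 : ℝ) < Fintype.card Fq := by exact_mod_cast Fintype.one_lt_card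
  refine ⟨fun i hi => ⟨?_, ?_⟩, fun i _ i' _ h => zpow_lt_zpow_right₀ hq (by linarith)⟩
  · obtain ⟨f, hf⟩ := exists_coeff_mul_eq (fun k : ℕ => (a (i + k)).powerSeriesPart)
      (fun k => if k = 0 then 1 else 0)
    have key : ∀ j ∈ I, (HahnSeries.single (i - 1) 1 * (f : LaurentSeries Fq) * a j).coeff (-1) =
        if i = j then 1 else 0 := by
      intro j hj
      rw [coeff_single_mul_coe_mul, (ha j hj).2, PowerSeries.coeff_coe]
      rcases lt_or_ge j i with hji | hji
      · rw [if_pos (by linarith), if_neg hji.ne']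
      · obtain ⟨k, rfl⟩ : ∃ k : ℕ, j = i + k := ⟨(j - i).toNat, by omega⟩
        have hk := hf k (by
          simpa using HahnSeries.coeff_order_eq_zero.not.2 (ha _ hj).1)
        rw [if_neg (by linarith), show (-1 - (i - 1) - -(i + (k : ℤ))).natAbs = k by omega, hk]
        simp
    refine ⟨_, key, ?_⟩
    obtain ⟨h0, hle⟩ := order_le_of_coeff_mul_ne_zero (n := -1) (x := a i) (by
      rw [key i hi]; simp)
    have hge : i - 1 ≤ (HahnSeries.single (i - 1) 1 * (f : LaurentSeries Fq)).order := by
      rw [HahnSeries.le_order_iff_forall h0]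
      intro j hj
      rw [HahnSeries.coeff_single_mul, PowerSeries.coeff_coe, if_pos (by linarith), mul_zero]
    rw [(ha i hi).2] at hle
    rw [lnorm, if_neg h0]
    congr 1
    linarith
  · rintro x ⟨μ, hμ, rfl⟩
    obtain ⟨h0, hle⟩ := order_le_of_coeff_mul_ne_zero (n := -1) (x := a i) (by
      rw [hμ i hi]; simp)
    rw [(ha i hi).2] at hle
    rw [lnorm, if_neg h0]
    exact zpow_le_zpow_right₀ hq.le (by linarith)
end
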